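/- arXiv:1303.2192 — 2 statements merged into one kernel-verified Lean document; each statement's English description precedes it below -/
import Mathlib

section
/- On the DeDonder–Weyl phase space W with multisymplectic 5-form Ω, let Θ : Fin 4 → Fin 4 → ℝ, Υ : Fin 4 → ℝ and Υ̂ : Fin 4 → Fin 4 → Fin 4 → ℝ be arbitrary, and for α ∈ Fin 4 define the vector X_α := (e_α, μ ↦ Θ(α,μ), Υ(α), (μ,ν) ↦ Υ̂(α)(μ,ν)) ∈ W, where e_α is the α-th standard basis vector of Fin 4 → ℝ. Then for every w ∈ W whose first (x-)component is zero: Ω(X₀, X₁, X₂, X₃, w) = d𝔢(w) + Σ_{μ,ν ∈ Fin 4} Θ(ν,μ)·dΠ^{μν}(w) − Σ_{μ ∈ Fin 4} (Σ_{ν ∈ Fin 4} Υ̂(ν)(μ,ν))·dA_μ(w). (This is the fiber part of the contraction X⌟Ω^{DDW} used to derive the generalized Hamilton equations.) -/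
/-!
Since `w` has no `x`-component, every evaluation of `dy` or `dy_ν` with `w` among its arguments
vanishes, so in the expansion of each wedge only the terms survive in which `w` is fed to
`d𝔢`, `dΠ^{μν}` or `dA_μ`. What is left involves only the vectors `X_α`, whose `x`-parts are the
standard basis: `dy(X₀, X₁, X₂, X₃) = 1`, and `dy_ν` of the three `X_α` with `α ≠ j` is
`(-1)^j δ_{νj}` (`dycW_Xvec_omit`). This sign cancels the alternating sign of the wedge at the
slot `j`. The factor `d𝔢(w)` or `dΠ^{μν}(w)` sits in slot `4`, hence has sign `+`, while `dA_μ(w)`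
sits in slot `3` of the inner wedge, hence has sign `-`.
-/

noncomputable section

/-- The DeDonder–Weyl phase space for 4D Maxwell theory, with points `(x, A, 𝔢, Π)`. -/
abbrev W : Type := (Fin 4 → ℝ) × (Fin 4 → ℝ) × ℝ × (Fin 4 → Fin 4 → ℝ)

/-- The coordinate 1-form `dx^ρ` on `W`. -/
def dxW (ρ : Fin 4) (w : W) : ℝ := w.1 ρ

/-- The coordinate 1-form `dA_μ` on `W`. -/
def dAW (μ : Fin 4) (w : W) : ℝ := w.2.1 μ

/-- The coordinate 1-form `d𝔢` on `W`. -/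
def deW (w : W) : ℝ := w.2.2.1

/-- The coordinate 1-form `dΠ^{μν}` on `W`. -/
def dPW (μ ν : Fin 4) (w : W) : ℝ := w.2.2.2 μ ν

/-- The `x`-coordinate direction `∂_ν` in `W`. -/
def EW (ν : Fin 4) : W := (Pi.single ν 1, 0, 0, 0)

/-- The 4-form `dy = dx⁰∧dx¹∧dx²∧dx³` on `W`, with the convention
`(α₁∧⋯∧α_k)(v₁,…,v_k) = det(αᵢ(vⱼ))`. -/
def dyW (v0 v1 v2 v3 : W) : ℝ :=
  Matrix.det (Matrix.of fun i j : Fin 4 => (![v0, v1, v2, v3] j).1 i)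

/-- `dy_ν = ∂_ν ⌟ dy` on `W`. -/
def dycW (ν : Fin 4) (v1 v2 v3 : W) : ℝ := dyW (EW ν) v1 v2 v3

/-- Wedge of a 1-form with a 3-form on `W`:
`(α∧ω)(v₀,…,v₃) = Σ_j (−1)^j α(v_j)·ω(v₀,…,v̂_j,…,v₃)`. -/
def wedge13W (α : W → ℝ) (ω : W → W → W → ℝ) (v0 v1 v2 v3 : W) : ℝ :=
  α v0 * ω v1 v2 v3 - α v1 * ω v0 v2 v3 + α v2 * ω v0 v1 v3 - α v3 * ω v0 v1 v2

/-- Wedge of a 1-form with a 4-form on `W`. -/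
def wedge14W (α : W → ℝ) (ω : W → W → W → W → ℝ) (v0 v1 v2 v3 v4 : W) : ℝ :=
  α v0 * ω v1 v2 v3 v4 - α v1 * ω v0 v2 v3 v4 + α v2 * ω v0 v1 v3 v4
    - α v3 * ω v0 v1 v2 v4 + α v4 * ω v0 v1 v2 v3

/-- The DeDonder–Weyl multisymplectic 5-form
`Ω = d𝔢∧dy + Σ_{μ,ν} dΠ^{μν}∧dA_μ∧dy_ν`. -/
def Omega (v0 v1 v2 v3 v4 : W) : ℝ :=
  wedge14W deW dyW v0 v1 v2 v3 v4 +
    ∑ μ : Fin 4, ∑ ν : Fin 4,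
      wedge14W (dPW μ ν) (wedge13W (dAW μ) (dycW ν)) v0 v1 v2 v3 v4

/-- The vector `X_α = (e_α, μ ↦ Θ(α,μ), Υ(α), (μ,ν) ↦ Υ̂(α)(μ,ν))`. -/
def Xvec (Θ : Fin 4 → Fin 4 → ℝ) (Y : Fin 4 → ℝ) (Yh : Fin 4 → Fin 4 → Fin 4 → ℝ)
    (α : Fin 4) : W :=
  (Pi.single α 1, fun μ => Θ α μ, Y α, fun μ ν => Yh α μ ν)

theorem dyW_of_fst_zero_right {w : W} (hw : w.1 = 0) (v0 v1 v2 : W) : dyW v0 v1 v2 w = 0 :=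
  Matrix.det_eq_zero_of_column_eq_zero 3 fun i => by simp [hw]

theorem dycW_of_fst_zero_right {w : W} (hw : w.1 = 0) (ν : Fin 4) (v1 v2 : W) :
    dycW ν v1 v2 w = 0 :=
  dyW_of_fst_zero_right hw _ _ _

theorem dyW_Xvec (Θ : Fin 4 → Fin 4 → ℝ) (Y : Fin 4 → ℝ) (Yh : Fin 4 → Fin 4 → Fin 4 → ℝ) :
    dyW (Xvec Θ Y Yh 0) (Xvec Θ Y Yh 1) (Xvec Θ Y Yh 2) (Xvec Θ Y Yh 3) = 1 := by
  rw [dyW, ← Matrix.det_one (n := Fin 4)]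
  congr 1
  ext i j
  fin_cases j <;> simp [Xvec, Matrix.one_apply, Pi.single_apply]

/-- The determinant with columns `e_ν` followed by the `e_α`, `α ≠ j`, in increasing order. -/
theorem det_single_omit : ∀ ν j : Fin 4,
    Matrix.det (Matrix.of fun i k : Fin 4 =>
      if i = ![ν, j.succAbove 0, j.succAbove 1, j.succAbove 2] k then (1 : ℝ) else 0) =
      if ν = j then (-1) ^ (j : ℕ) else 0 := by
  intro ν j
  fin_cases ν <;> fin_cases j <;>
    simp [Matrix.det_succ_row_zero, Fin.sum_univ_succ, Fin.succAbove] <;>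
    norm_num

/-- The value `(-1)^j δ_{νj}` of `dy_ν` on the `X_α` with `α ≠ j`, in increasing order:
`(-1)^j` is the sign of moving `e_j` from the first slot to its place among the others. -/
theorem dycW_Xvec_omit (Θ : Fin 4 → Fin 4 → ℝ) (Y : Fin 4 → ℝ)
    (Yh : Fin 4 → Fin 4 → Fin 4 → ℝ) (ν j : Fin 4) :
    dycW ν (Xvec Θ Y Yh (j.succAbove 0)) (Xvec Θ Y Yh (j.succAbove 1))
      (Xvec Θ Y Yh (j.succAbove 2)) = if ν = j then (-1) ^ (j : ℕ) else 0 := by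
  rw [← det_single_omit ν j, dycW, dyW]
  congr 1
  ext i k
  fin_cases k <;> simp [EW, Xvec, Pi.single_apply] <;> rfl

/-- The fiber part of the contraction `X⌟Ω^{DDW}` used to derive the generalized Hamilton
equations: for every `w ∈ W` with vanishing `x`-component,
`Ω(X₀,X₁,X₂,X₃,w) = d𝔢(w) + Σ Θ(ν,μ)·dΠ^{μν}(w) − Σ_μ (Σ_ν Υ̂(ν)(μ,ν))·dA_μ(w)`. -/
theorem contraction_fiber_part (Θ : Fin 4 → Fin 4 → ℝ) (Y : Fin 4 → ℝ)
    (Yh : Fin 4 → Fin 4 → Fin 4 → ℝ) :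
    ∀ w : W, w.1 = 0 →
      Omega (Xvec Θ Y Yh 0) (Xvec Θ Y Yh 1) (Xvec Θ Y Yh 2) (Xvec Θ Y Yh 3) w =
        deW w + (∑ μ : Fin 4, ∑ ν : Fin 4, Θ ν μ * dPW μ ν w)
          - ∑ μ : Fin 4, (∑ ν : Fin 4, Yh ν μ ν) * dAW μ w := by
  intro w hw
  have c0 := fun ν => dycW_Xvec_omit Θ Y Yh ν 0
  have c1 := fun ν => dycW_Xvec_omit Θ Y Yh ν 1
  have c2 := fun ν => dycW_Xvec_omit Θ Y Yh ν 2
  have c3 := fun ν => dycW_Xvec_omit Θ Y Yh ν 3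
  simp only [show (0 : Fin 4).succAbove (0 : Fin 3) = 1 from rfl,
    show (0 : Fin 4).succAbove (1 : Fin 3) = 2 from rfl,
    show (0 : Fin 4).succAbove (2 : Fin 3) = 3 from rfl,
    show (1 : Fin 4).succAbove (0 : Fin 3) = 0 from rfl,
    show (1 : Fin 4).succAbove (1 : Fin 3) = 2 from rfl,
    show (1 : Fin 4).succAbove (2 : Fin 3) = 3 from rfl,
    show (2 : Fin 4).succAbove (0 : Fin 3) = 0 from rfl,
    show (2 : Fin 4).succAbove (1 : Fin 3) = 1 from rfl,
    show (2 : Fin 4).succAbove (2 : Fin 3) = 3 from rfl,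
    show (3 : Fin 4).succAbove (0 : Fin 3) = 0 from rfl,
    show (3 : Fin 4).succAbove (1 : Fin 3) = 1 from rfl,
    show (3 : Fin 4).succAbove (2 : Fin 3) = 2 from rfl] at c0 c1 c2 c3
  have key : ∀ μ ν : Fin 4,
      wedge14W (dPW μ ν) (wedge13W (dAW μ) (dycW ν))
        (Xvec Θ Y Yh 0) (Xvec Θ Y Yh 1) (Xvec Θ Y Yh 2) (Xvec Θ Y Yh 3) w =
      Θ ν μ * dPW μ ν w - Yh ν μ ν * dAW μ w := by
    intro μ ν
    simp only [wedge14W, wedge13W, dycW_of_fst_zero_right hw, c0, c1, c2, c3]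
    fin_cases ν <;> simp [dAW, dPW, Xvec] <;> ring
  simp only [Omega, key, Finset.sum_sub_distrib, Finset.sum_mul]
  simp only [wedge14W, dyW_of_fst_zero_right hw, dyW_Xvec]
  ring
end
end

section
/- Let A : (Fin 4 → ℝ) → (Fin 4 → ℝ), 𝔢 : (Fin 4 → ℝ) → ℝ and Π : (Fin 4 → ℝ) → (Fin 4 → Fin 4 → ℝ) be smooth, with Π(x) antisymmetric for every x. For α ∈ Fin 4 define the graph-tangent vectors X_α(x) := (e_α, ∂_αA(x), ∂_α𝔢(x), ∂_αΠ(x)) ∈ W, where ∂_α denotes the derivative in the α-th coordinate direction. Let H : W → ℝ be the DeDonder–Weyl Maxwell Hamiltonian H(x, A, 𝔢, Π) := 𝔢 − (1/4)·Σ_{μ,ν,ρ,σ} η(μ,ρ)·η(ν,σ)·Π(μ,ν)·Π(ρ,σ). Then the following are equivalent: (i) for every x and every w ∈ W whose x-component is zero and whose Π-component is antisymmetric, Ω(X₀(x), X₁(x), X₂(x), X₃(x), w) = dH(w), where dH is the differential of H at the point (x, A(x), 𝔢(x), Π(x)); (ii) for all x and all μ, ν ∈ Fin 4: Σ_{ρ,σ}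 η(μ,ρ)·η(ν,σ)·Π(ρ,σ)(x) = ∂_μA_ν(x) − ∂_νA_μ(x), and Σ_ν ∂_νΠ(μ,ν)(x) = 0. (Thus the generalized Hamilton equations on the Maxwell multisymplectic manifold are equivalent to the Legendre relation Π = F together with Maxwell's vacuum equations ∂_ν F^{μν} = 0.) -/
/-!
For `w` with vanishing `x`-component, `Ω(X₀,…,X₃,w)` is linear in `w` and the determinants
`dy_ν(X₀,…,X̂_α,…,X₃) = (-1)^α δ_{αν}` collapse it to
`w_𝔢 + Σ w_Π^{μν} ∂_νA_μ - Σ_μ (Σ_ν ∂_νΠ^{μν}) w_{A_μ}` (`Omega_graph`), whereas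
`dH(w) = w_𝔢 - ½ Σ Π_{μν} w_Π^{μν}` (`fderiv_Ham`), with indices lowered by `η`.
The `w_𝔢` terms cancel. The `w_A`-direction is unconstrained, which gives
`Σ_ν ∂_νΠ^{μν} = 0`. The `w_Π`-direction is constrained to be antisymmetric, so only the
antisymmetric part of `∂_νA_μ + ½ Π_{μν}` has to vanish (`sum_antisymm_mul_eq_zero_iff`); since
`Π` is antisymmetric, this is the Legendre relation `Π_{μν} = ∂_μA_ν - ∂_νA_μ`.
-/

noncomputable section

/-- The Minkowski metric on `Fin 4`. -/
def eta (μ ν : Fin 4) : ℝ := if μ = ν then (if μ = 0 then 1 else -1) else 0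

/-- The DeDonder–Weyl Maxwell Hamiltonian
`H(x, A, 𝔢, Π) = 𝔢 − ¼ Σ η(μ,ρ)η(ν,σ)Π(μ,ν)Π(ρ,σ)`. -/
def Ham (w : W) : ℝ :=
  w.2.2.1 - (1/4) * ∑ μ : Fin 4, ∑ ν : Fin 4, ∑ ρ : Fin 4, ∑ σ : Fin 4,
    eta μ ρ * eta ν σ * w.2.2.2 μ ν * w.2.2.2 ρ σ

/-- The graph-tangent vector `X_α(x) = (e_α, ∂_αA(x), ∂_α𝔢(x), ∂_αΠ(x))` of the fields
`(A, 𝔢, Π)`. -/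
def Xgraph (A : (Fin 4 → ℝ) → (Fin 4 → ℝ)) (En : (Fin 4 → ℝ) → ℝ)
    (Pm : (Fin 4 → ℝ) → (Fin 4 → Fin 4 → ℝ)) (x : Fin 4 → ℝ) (α : Fin 4) : W :=
  (Pi.single α 1, fderiv ℝ A x (Pi.single α 1), fderiv ℝ En x (Pi.single α 1),
    fderiv ℝ Pm x (Pi.single α 1))

/-- `dy` is zero on a 4-tuple whose last vector has no `x`-component. -/
lemma dyW_last_zero (a b c w : W) (hw : w.1 = 0) : dyW a b c w = 0 := by
  refine Matrix.det_eq_zero_of_column_eq_zero 3 fun i => ?_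
  simp [hw]

lemma dycW_last_zero (ν : Fin 4) (a b w : W) (hw : w.1 = 0) : dycW ν a b w = 0 :=
  dyW_last_zero _ _ _ _ hw

lemma dyW_basis (v : Fin 4 → W) (hv : ∀ α, (v α).1 = Pi.single α 1) :
    dyW (v 0) (v 1) (v 2) (v 3) = 1 := by
  have h : (Matrix.of fun i j : Fin 4 => (![v 0, v 1, v 2, v 3] j).1 i) =
      (1 : Matrix (Fin 4) (Fin 4) ℝ) := by
    ext i j
    fin_cases i <;> fin_cases j <;> simp [hv]
  rw [dyW, h, Matrix.det_one]

set_option maxHeartbeats 1000000 in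
/-- `dy_ν` on the basis vectors with `e_α` omitted is `(-1)^α δ_{αν}`. -/
lemma dycW_basis (v : Fin 4 → W) (hv : ∀ α, (v α).1 = Pi.single α 1) (ν : Fin 4) :
    dycW ν (v 1) (v 2) (v 3) = (if ν = 0 then 1 else 0) ∧
    dycW ν (v 0) (v 2) (v 3) = (if ν = 1 then -1 else 0) ∧
    dycW ν (v 0) (v 1) (v 3) = (if ν = 2 then 1 else 0) ∧
    dycW ν (v 0) (v 1) (v 2) = (if ν = 3 then -1 else 0) := by
  fin_cases ν <;>
    simp [dycW, dyW, EW, hv, Matrix.det_succ_row_zero, Fin.sum_univ_succ, Fin.succAbove]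

/-- Contraction of `Ω` with four vectors that project to the coordinate basis of space-time and
a fifth vector without `x`-component. -/
lemma Omega_graph (v : Fin 4 → W) (hv : ∀ α, (v α).1 = Pi.single α 1) (w : W) (hw : w.1 = 0) :
    Omega (v 0) (v 1) (v 2) (v 3) w =
      w.2.2.1 + (∑ μ, ∑ ν, w.2.2.2 μ ν * (v ν).2.1 μ)
        - ∑ μ, (∑ ν, (v ν).2.2.2 μ ν) * w.2.1 μ := by
  have h1 : ∀ μ ν : Fin 4,
      wedge14W (dPW μ ν) (wedge13W (dAW μ) (dycW ν)) (v 0) (v 1) (v 2) (v 3) w =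
        w.2.2.2 μ ν * (v ν).2.1 μ - (v ν).2.2.2 μ ν * w.2.1 μ := by
    intro μ ν
    obtain ⟨e0, e1, e2, e3⟩ := dycW_basis v hv ν
    simp only [wedge14W, wedge13W, dycW_last_zero _ _ _ w hw, e0, e1, e2, e3, dPW, dAW]
    fin_cases ν <;> simp <;> ring
  simp only [Omega, h1, Finset.sum_sub_distrib, Finset.sum_mul]
  simp only [wedge14W, dyW_last_zero _ _ _ w hw, dyW_basis v hv, deW]
  ring

/-- The double contraction with the diagonal metric `η` only keeps the diagonal terms. -/
lemma sum_eta_eta (μ ν : Fin 4) (f : Fin 4 → Fin 4 → ℝ) :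
    (∑ ρ, ∑ σ, eta μ ρ * eta ν σ * f ρ σ) = eta μ μ * eta ν ν * f μ ν := by
  rw [Finset.sum_eq_single μ, Finset.sum_eq_single ν]
  · intro σ _ h
    simp [eta, h.symm]
  · simp
  · intro ρ _ h
    simp [eta, h.symm]
  · simp

lemma Ham_eq (w : W) :
    Ham w = w.2.2.1 - (1/4) * ∑ μ, ∑ ν, eta μ μ * eta ν ν * (w.2.2.2 μ ν) ^ 2 := by
  have h : ∀ μ ν : Fin 4, (∑ ρ, ∑ σ, eta μ ρ * eta ν σ * w.2.2.2 μ ν * w.2.2.2 ρ σ) =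
      eta μ μ * eta ν ν * (w.2.2.2 μ ν) ^ 2 := by
    intro μ ν
    have := sum_eta_eta μ ν fun ρ σ => w.2.2.2 μ ν * w.2.2.2 ρ σ
    simp only [← mul_assoc] at this
    rw [this]
    ring
  simp only [Ham, h]

lemma fderiv_Ham (p w : W) :
    fderiv ℝ Ham p w =
      w.2.2.1 - (1/2) * ∑ μ, ∑ ν, eta μ μ * eta ν ν * p.2.2.2 μ ν * w.2.2.2 μ ν := by
  obtain ⟨L, hL⟩ : ∃ L : Fin 4 → Fin 4 → W →L[ℝ] ℝ, ∀ μ ν w, L μ ν w = w.2.2.2 μ ν :=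
    ⟨fun μ ν =>
      ((ContinuousLinearMap.proj ν : (Fin 4 → ℝ) →L[ℝ] ℝ).comp
        (ContinuousLinearMap.proj μ : (Fin 4 → Fin 4 → ℝ) →L[ℝ] (Fin 4 → ℝ))).comp
        ((ContinuousLinearMap.snd ℝ ℝ (Fin 4 → Fin 4 → ℝ)).comp
          ((ContinuousLinearMap.snd ℝ (Fin 4 → ℝ) (ℝ × (Fin 4 → Fin 4 → ℝ))).comp
            (ContinuousLinearMap.snd ℝ (Fin 4 → ℝ) _))), fun _ _ _ => rfl⟩
  obtain ⟨l, hl⟩ : ∃ l : W →L[ℝ] ℝ, ∀ w, l w = w.2.2.1 :=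
    ⟨(ContinuousLinearMap.fst ℝ ℝ (Fin 4 → Fin 4 → ℝ)).comp
      ((ContinuousLinearMap.snd ℝ (Fin 4 → ℝ) (ℝ × (Fin 4 → Fin 4 → ℝ))).comp
        (ContinuousLinearMap.snd ℝ (Fin 4 → ℝ) _)), fun _ => rfl⟩
  have h := (l.hasFDerivAt (x := p)).fun_sub ((HasFDerivAt.fun_sum fun μ (_ : μ ∈ Finset.univ) =>
    HasFDerivAt.fun_sum fun ν (_ : ν ∈ Finset.univ) =>
      ((L μ ν).hasFDerivAt.pow 2).const_mul (eta μ μ * eta ν ν)).const_mul (1/4 : ℝ))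
  have hH : Ham = fun w : W => l w -
      (1/4) * ∑ μ, ∑ ν, eta μ μ * eta ν ν * (L μ ν w) ^ 2 := by
    simpa only [hL, hl] using funext Ham_eq
  rw [hH, h.fderiv]
  simp [Finset.mul_sum, hL, hl]
  refine Finset.sum_congr rfl fun μ _ => Finset.sum_congr rfl fun ν _ => ?_
  ring

/-- A matrix is orthogonal to all antisymmetric matrices exactly when it is symmetric. -/
lemma sum_antisymm_mul_eq_zero_iff (G : Fin 4 → Fin 4 → ℝ) :
    (∀ Q : Fin 4 → Fin 4 → ℝ, (∀ μ ν, Q μ ν + Q ν μ = 0) → ∑ μ, ∑ ν, Q μ ν * G μ ν = 0) ↔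
      ∀ μ ν, G μ ν = G ν μ := by
  constructor
  · intro h μ ν
    -- The test matrix is `E_{μν} - E_{νμ}`.
    have := h (fun i j => (if i = μ then 1 else 0) * (if j = ν then 1 else 0)
      - (if i = ν then 1 else 0) * (if j = μ then 1 else 0)) (fun i j => by ring)
    simp only [sub_mul, Finset.sum_sub_distrib, mul_assoc, ← Finset.mul_sum] at this
    simp at this
    linarith
  · intro h Q hQ
    have h1 : ∑ μ, ∑ ν, Q μ ν * G μ ν = -∑ μ, ∑ ν, Q μ ν * G μ ν := by
      conv_lhs => rw [Finset.sum_comm]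
      simp only [← Finset.sum_neg_distrib]
      refine Finset.sum_congr rfl fun μ _ => Finset.sum_congr rfl fun ν _ => ?_
      rw [h ν μ]
      linear_combination G μ ν * hQ ν μ
    linarith

/-- The generalized Hamilton equations on the Maxwell multisymplectic manifold are
equivalent to the Legendre relation `Π = F` together with Maxwell's vacuum equations
`∂_ν F^{μν} = 0`. -/
theorem hamilton_iff_maxwell (A : (Fin 4 → ℝ) → (Fin 4 → ℝ))
    (En : (Fin 4 → ℝ) → ℝ) (Pm : (Fin 4 → ℝ) → (Fin 4 → Fin 4 → ℝ))
    (hA : ContDiff ℝ (⊤ : ℕ∞) A) (hE : ContDiff ℝ (⊤ : ℕ∞) En) (hP : ContDiff ℝ (⊤ : ℕ∞) Pm)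
    (hanti : ∀ (x : Fin 4 → ℝ) (μ ν : Fin 4), Pm x μ ν + Pm x ν μ = 0) :
    (∀ (x : Fin 4 → ℝ) (w : W), w.1 = 0 →
        (∀ μ ν : Fin 4, w.2.2.2 μ ν + w.2.2.2 ν μ = 0) →
        Omega (Xgraph A En Pm x 0) (Xgraph A En Pm x 1) (Xgraph A En Pm x 2)
            (Xgraph A En Pm x 3) w =
          fderiv ℝ Ham (x, A x, En x, Pm x) w) ↔
      ((∀ (x : Fin 4 → ℝ) (μ ν : Fin 4),
          (∑ ρ : Fin 4, ∑ σ : Fin 4, eta μ ρ * eta ν σ * Pm x ρ σ) =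
            fderiv ℝ A x (Pi.single μ 1) ν - fderiv ℝ A x (Pi.single ν 1) μ) ∧
        (∀ (x : Fin 4 → ℝ) (μ : Fin 4),
          (∑ ν : Fin 4, fderiv ℝ (fun y => Pm y μ ν) x (Pi.single ν 1)) = 0)) := by
  have hdP : ∀ x v μ ν, fderiv ℝ (fun y => Pm y μ ν) x v = fderiv ℝ Pm x v μ ν := by
    intro x v μ ν
    have h := (hP.differentiable (by simp) x).hasFDerivAt
    have h2 := hasFDerivAt_pi'.1 (hasFDerivAt_pi'.1 h μ) ν
    rw [h2.fderiv]
    rfl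
  -- The Hamilton equation at `x` tested on `w`: the `w_𝔢` terms cancel and the rest is linear in `w_Π`, `w_A`.
  have key : ∀ (x : Fin 4 → ℝ) (w : W), w.1 = 0 →
      (Omega (Xgraph A En Pm x 0) (Xgraph A En Pm x 1) (Xgraph A En Pm x 2)
          (Xgraph A En Pm x 3) w = fderiv ℝ Ham (x, A x, En x, Pm x) w ↔
        (∑ μ, ∑ ν, w.2.2.2 μ ν * (fderiv ℝ A x (Pi.single ν 1) μ
            + 1/2 * (eta μ μ * eta ν ν * Pm x μ ν)))
          - ∑ μ, (∑ ν, fderiv ℝ Pm x (Pi.single ν 1) μ ν) * w.2.1 μ = 0) := by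
    intro x w hw
    rw [Omega_graph (Xgraph A En Pm x) (fun _ => rfl) w hw, fderiv_Ham]
    have hs : (∑ μ, ∑ ν, w.2.2.2 μ ν * (fderiv ℝ A x (Pi.single ν 1) μ
            + 1/2 * (eta μ μ * eta ν ν * Pm x μ ν))) =
        (∑ μ, ∑ ν, w.2.2.2 μ ν * fderiv ℝ A x (Pi.single ν 1) μ) +
          (1/2) * ∑ μ, ∑ ν, eta μ μ * eta ν ν * Pm x μ ν * w.2.2.2 μ ν := by
      simp only [Finset.mul_sum, ← Finset.sum_add_distrib]
      refine Finset.sum_congr rfl fun μ _ => Finset.sum_congr rfl fun ν _ => ?_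
      ring
    rw [hs]
    simp only [Xgraph]
    constructor <;> intro h <;> linarith
  -- The Legendre relation says that `∂_νA_μ + ½ Π_{μν}` is symmetric, as `Π` is antisymmetric.
  have legendre : ∀ x : Fin 4 → ℝ,
      (∀ μ ν, fderiv ℝ A x (Pi.single ν 1) μ + 1/2 * (eta μ μ * eta ν ν * Pm x μ ν) =
        fderiv ℝ A x (Pi.single μ 1) ν + 1/2 * (eta ν ν * eta μ μ * Pm x ν μ)) ↔
      ∀ μ ν, (∑ ρ, ∑ σ, eta μ ρ * eta ν σ * Pm x ρ σ) =
        fderiv ℝ A x (Pi.single μ 1) ν - fderiv ℝ A x (Pi.single ν 1) μ := by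
    intro x
    refine forall₂_congr fun μ ν => ?_
    rw [sum_eta_eta, show Pm x ν μ = -Pm x μ ν by linarith [hanti x μ ν]]
    constructor <;> intro h <;> linarith
  simp only [hdP]
  rw [← forall_and]
  refine forall_congr' fun x => ?_
  rw [← legendre x,
    ← sum_antisymm_mul_eq_zero_iff fun μ ν =>
      fderiv ℝ A x (Pi.single ν 1) μ + 1/2 * (eta μ μ * eta ν ν * Pm x μ ν)]
  constructor
  · intro h
    refine ⟨fun Q hQ => ?_, fun μ => ?_⟩
    · simpa using (key x (0, 0, 0, Q) rfl).1 (h _ rfl hQ)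
    · simpa [Pi.single_apply] using
        (key x (0, Pi.single μ 1, 0, 0) rfl).1 (h _ rfl (by simp))
  · rintro ⟨h1, h2⟩ w hw hQ
    rw [key x w hw, h1 _ hQ]
    simp [h2]
end
end
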